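/- Let m, r, d be integers with m > 2, d ≥ 1, and 2 ≤ 2r ≤ m−1. Then the closure of the set A(⌈d/2⌉, …, ⌈d/2⌉) (with ⌈d/2⌉ repeated r times), with respect to coefficientwise convergence, equals the set of all m×m skew-symmetric matrix polynomials over ℂ of grade d with normal rank at most 2r. -/

import Mathlib

open Polynomial Matrix

/-- The normal rank of a matrix polynomial: its rank as a matrix over the field of
rational functions ℂ(λ). -/
noncomputable def normalRank {m n : ℕ} (P : Matrix (Fin m) (Fin n) (Polynomial ℂ)) : ℕ :=
  (P.map (algebraMap (Polynomial ℂ) (RatFunc ℂ))).rank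

/-- The degree of the `j`-th column of a matrix polynomial: the maximum of the degrees
of its entries. -/
noncomputable def colDegree {m k : ℕ} (L : Matrix (Fin m) (Fin k) (Polynomial ℂ))
    (j : Fin k) : ℕ :=
  Finset.univ.sup fun i => (L i j).natDegree

/-- The 2r×2r matrix `J₂ᵣ = [[0, Δᵣ], [−Δᵣ, 0]]`, where `Δᵣ` is the r×r anti-identity. -/
noncomputable def Jmat (r : ℕ) : Matrix (Fin (2 * r)) (Fin (2 * r)) (Polynomial ℂ) :=
  Matrix.of fun i j =>
    if (i : ℕ) + (j : ℕ) + 1 = 2 * r ∧ (i : ℕ) < r then 1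
    else if (i : ℕ) + (j : ℕ) + 1 = 2 * r ∧ (j : ℕ) < r then -1
    else 0

/-- The set `A(d₁, …, d_r)`: m×m matrix polynomials of the form `L J₂ᵣ Lᵀ`, where the
`i`-th column of `L` has degree exactly `dᵢ` and the `(2r−i+1)`-th column has degree
exactly `d − dᵢ`, for `i = 1, …, r`. -/
noncomputable def Aset (m r d : ℕ) (ds : Fin r → ℕ) :
    Set (Matrix (Fin m) (Fin m) (Polynomial ℂ)) :=
  {P | ∃ L : Matrix (Fin m) (Fin (2 * r)) (Polynomial ℂ),
    (∀ i : Fin r,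
      colDegree L (Fin.castLE (by omega) i) = ds i ∧
      colDegree L (Fin.castLE (by omega) i).rev = d - ds i) ∧
    P = L * Jmat r * Lᵀ}

/-- The tuple of coefficient matrices of a matrix polynomial of grade `d`. -/
noncomputable def coeffTuple (m d : ℕ) (P : Matrix (Fin m) (Fin m) (Polynomial ℂ)) :
    Fin (d + 1) → Matrix (Fin m) (Fin m) ℂ :=
  fun i => Matrix.of fun a b => (P a b).coeff (i : ℕ)

/-!
A matrix polynomial is skew-symmetric of normal rank at most `2r` if and only if all its values are
skew-symmetric of rank at most `2r`, and the vanishing of minors is a closed condition on the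
coefficients; this gives `⊆`.

Conversely, let `P` be skew-symmetric of grade `d`, and let the rows of `B` be a row-reduced basis,
with degrees `a i`, of the polynomial vectors in the row space of `P` over `ℂ(λ)`. Then
`P = Bᵀ * Q * B` with `Q` skew-symmetric, and since no leading terms cancel,
`deg (Q i j) + a i + a j ≤ d`. Splitting off the first row and column of `Q` subtracts from `P` a
wedge `u ∧ v = u vᵀ - v uᵀ` with `deg u ≤ a` and `deg v ≤ d - a`. What remains has normal rank at
most `2(r - 1)`, because a skew-symmetric matrix of odd size is singular. So `P` is a sum of `r`
such wedges.

It remains to approximate each wedge. If `deg u ≤ a`, `deg v ≤ b + 1` and `a ≤ b`, perturb `u` to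
`w` of degree `a + 1` so that a multiple `q w` has the same leading term as `v`; then
`w ∧ v = w ∧ (v - q w)` has degrees `(a + 1, b)`. Iterating balances the degrees to
`(⌈d/2⌉, ⌊d/2⌋)`, and one more perturbation makes these degrees exact.
-/

section ReducedBasis

variable {F ι σ : Type*} [Field F] [Fintype ι]

/-- The rows of `B` form a basis of `N`, and the `i`-th row has degree at most `a i`. -/
structure IsBoundedBasis (N : Submodule F[X] (σ → F[X])) (B : Matrix ι σ F[X])
    (a : ι → ℕ) : Prop where
  linearIndependent : LinearIndependent F[X] B.row
  span_eq : Submodule.span F[X] (Set.range B.row) = N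
  natDegree_le : ∀ i s, (B i s).natDegree ≤ a i

/-- The predictable degree property of row-reduced matrix polynomials: no leading terms cancel in a
combination `q ᵥ* B` of the rows, when the `i`-th row is regarded as having degree `a i`. -/
def HasPredictableDegree (B : Matrix ι σ F[X]) (a : ι → ℕ) : Prop :=
  ∀ (q : ι → F[X]) (D : ℕ), (∀ s, ((q ᵥ* B) s).natDegree ≤ D) →
    ∀ i, q i ≠ 0 → (q i).natDegree + a i ≤ D

lemma span_row_updateRow_vecMul {R : Type*} [CommRing R] [DecidableEq ι] (B : Matrix ι σ R)
    {p : ι → R} {j : ι} (hp : IsUnit (p j)) :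
    Submodule.span R (Set.range (B.updateRow j (p ᵥ* B)).row) =
      Submodule.span R (Set.range B.row) := by
  set C := B.updateRow j (p ᵥ* B)
  have row_ne (i : ι) (hij : i ≠ j) : B.row i ∈ Submodule.span R (Set.range C.row) :=
    Submodule.subset_span ⟨i, updateRow_ne hij⟩
  refine le_antisymm (Submodule.span_le.2 ?_) (Submodule.span_le.2 ?_)
  · rintro _ ⟨i, rfl⟩
    rcases eq_or_ne i j with rfl | hij
    · rw [show C.row i = ∑ l, p l • B.row l from updateRow_self.trans (vecMul_eq_sum p B)]
      exact Submodule.sum_mem _ fun l _ ↦ Submodule.smul_mem _ _ (Submodule.subset_span ⟨l, rfl⟩)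
    · exact Submodule.subset_span ⟨i, (updateRow_ne hij).symm⟩
  · rintro _ ⟨i, rfl⟩
    rcases eq_or_ne i j with rfl | hij
    · have hsolve : p i • B.row i = C.row i - ∑ l ∈ Finset.univ.erase i, p l • B.row l := by
        rw [eq_sub_iff_add_eq, Finset.add_sum_erase _ (fun l ↦ p l • B.row l) (Finset.mem_univ i)]
        exact (vecMul_eq_sum p B).symm.trans updateRow_self.symm
      rw [SetLike.mem_coe, ← Submodule.smul_mem_iff_of_isUnit _ hp, hsolve]
      exact Submodule.sub_mem _ (Submodule.subset_span ⟨i, rfl⟩) <|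
        Submodule.sum_mem _ fun l hl ↦ Submodule.smul_mem _ _ (row_ne l (Finset.ne_of_mem_erase hl))
    · exact row_ne i hij

lemma linearIndependent_row_updateRow_vecMul {R : Type*} [CommRing R] [IsDomain R] [DecidableEq ι]
    {B : Matrix ι σ R} (hB : LinearIndependent R B.row) {p : ι → R} {j : ι} (hp : p j ≠ 0) :
    LinearIndependent R (B.updateRow j (p ᵥ* B)).row := by
  refine hB.update j (p ᵥ* B) ⟨1, one_mem _, (Finsupp.linearEquivFunOnFinite R R ι).symm p,
    mem_nonZeroDivisors_of_ne_zero hp, ?_⟩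
  rw [one_smul, Finsupp.linearCombination_eq_fintype_linearCombination_apply]
  exact vecMul_eq_sum p B

lemma degree_lt_of_degree_X_pow_mul_lt {f : F[X]} {n e : ℕ}
    (h : (X ^ n * f).degree < ((n + e : ℕ) : WithBot ℕ)) : f.degree < e := by
  rw [degree_lt_iff_coeff_zero] at h ⊢
  intro k hk
  rw [← coeff_X_pow_mul f n k]
  exact h _ (by omega)

lemma degree_modByMonic_X_pow_mul_lt (q : F[X]) {f : F[X]} {n e a : ℕ} (hf : f.natDegree ≤ a)
    (hq : q ≠ 0 → q.natDegree + a < n + e ∨ a ≤ e) :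
    (q %ₘ X ^ n * f).degree < ((n + e : ℕ) : WithBot ℕ) := by
  rcases eq_or_ne (q %ₘ X ^ n) 0 with h0 | h0
  · rw [h0, zero_mul, degree_zero]
    exact WithBot.bot_lt_coe _
  have hq0 : q ≠ 0 := by
    rintro rfl
    exact h0 (zero_modByMonic _)
  have hle : (q %ₘ X ^ n).natDegree ≤ q.natDegree := natDegree_modByMonic_le_left
  have hlt : (q %ₘ X ^ n).natDegree < n := by
    simpa [natDegree_lt_iff_degree_lt h0] using degree_modByMonic_lt q (monic_X_pow n)
  refine degree_le_natDegree.trans_lt (Nat.cast_lt.2 (natDegree_mul_le.trans_lt ?_))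
  rcases hq hq0 with h | h <;> omega

lemma isUnit_divByMonic_X_pow_natDegree {q : F[X]} (hq : q ≠ 0) :
    IsUnit (q /ₘ X ^ q.natDegree) := by
  rw [isUnit_iff_degree_eq_zero, degree_eq_natDegree, natDegree_divByMonic _ (monic_X_pow _),
    natDegree_X_pow, Nat.sub_self, Nat.cast_zero]
  rw [Ne, divByMonic_eq_zero_iff (monic_X_pow _), degree_X_pow, degree_eq_natDegree hq]
  exact lt_irrefl _

lemma exists_leading_index {ι : Type*} [Finite ι] {q : ι → F[X]} (a : ι → ℕ) (hq : q ≠ 0) :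
    ∃ j, q j ≠ 0 ∧ ∀ i, q i ≠ 0 → (q i).natDegree + a i < (q j).natDegree + a j ∨
      (q i).natDegree + a i = (q j).natDegree + a j ∧ a i ≤ a j := by
  obtain ⟨j, hj, hmax⟩ := (Set.toFinite {i | q i ≠ 0}).exists_maximalFor
    (fun i ↦ toLex ((q i).natDegree + a i, a i)) _ (Function.ne_iff.1 hq)
  exact ⟨j, hj, fun i hi ↦ Prod.Lex.toLex_le_toLex.1 (le_of_not_gt fun h ↦ (hmax hi h.le).not_gt h)⟩

-- Divide every coefficient of a cancelling combination by `X ^ n`, where `n` is the degree of its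
-- leading coefficient: that coefficient becomes a unit, and the remainders contribute only terms of
-- low degree.
lemma exists_isUnit_degree_vecMul_lt {B : Matrix ι σ F[X]} {a : ι → ℕ}
    (ha : ∀ i s, (B i s).natDegree ≤ a i) (hB : ¬ HasPredictableDegree B a) :
    ∃ (p : ι → F[X]) (j : ι), IsUnit (p j) ∧ ∀ s, ((p ᵥ* B) s).degree < a j := by
  simp only [HasPredictableDegree, not_forall, not_le] at hB
  obtain ⟨q, D, hqD, i₀, hi₀, hD⟩ := hB
  obtain ⟨j, hj, hmax⟩ := exists_leading_index a (Function.ne_iff.2 ⟨i₀, hi₀⟩)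
  set n := (q j).natDegree
  have hDj : D < n + a j := by rcases hmax i₀ hi₀ with h | h <;> omega
  refine ⟨fun i ↦ q i /ₘ X ^ n, j, isUnit_divByMonic_X_pow_natDegree hj,
    fun s ↦ degree_lt_of_degree_X_pow_mul_lt (n := n) ?_⟩
  have hsplit : X ^ n * ((fun i ↦ q i /ₘ X ^ n) ᵥ* B) s =
      (q ᵥ* B) s - ∑ i, q i %ₘ X ^ n * B i s := by
    simp only [vecMul, dotProduct, Finset.mul_sum, ← Finset.sum_sub_distrib]
    refine Finset.sum_congr rfl fun i _ ↦ ?_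
    linear_combination B i s * modByMonic_add_div (q i) (X ^ n)
  rw [hsplit, ← mem_degreeLT]
  refine Submodule.sub_mem _ (mem_degreeLT.2 ?_) (Submodule.sum_mem _ fun i _ ↦ mem_degreeLT.2 ?_)
  · exact degree_le_natDegree.trans_lt (Nat.cast_lt.2 ((hqD s).trans_lt hDj))
  · exact degree_modByMonic_X_pow_mul_lt _ (ha i s) fun hi ↦ (hmax i hi).imp_right And.right

namespace IsBoundedBasis

variable {N : Submodule F[X] (σ → F[X])} {B : Matrix ι σ F[X]} {a : ι → ℕ}

lemma updateRow [DecidableEq ι] (hB : IsBoundedBasis N B a) {p : ι → F[X]} {j : ι}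
    (hp : IsUnit (p j)) {b : ℕ} (hdeg : ∀ s, ((p ᵥ* B) s).natDegree ≤ b) :
    IsBoundedBasis N (B.updateRow j (p ᵥ* B)) (Function.update a j b) where
  linearIndependent := linearIndependent_row_updateRow_vecMul hB.linearIndependent hp.ne_zero
  span_eq := (span_row_updateRow_vecMul B hp).trans hB.span_eq
  natDegree_le i s := by
    rcases eq_or_ne i j with rfl | hij
    · simpa only [updateRow_self, Function.update_self] using hdeg s
    · simpa only [updateRow_ne hij, Function.update_of_ne hij] using hB.natDegree_le i s

lemma exists_sum_lt (hB : IsBoundedBasis N B a) (h : ¬ HasPredictableDegree B a) :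
    ∃ (C : Matrix ι σ F[X]) (b : ι → ℕ), IsBoundedBasis N C b ∧ ∑ i, b i < ∑ i, a i := by
  classical
  obtain ⟨p, j, hp, hdeg⟩ := exists_isUnit_degree_vecMul_lt hB.natDegree_le h
  have haj : a j ≠ 0 := fun h0 ↦ by
    have hzero : p ᵥ* B = 0 := funext fun s ↦ by
      simpa [h0, Nat.WithBot.lt_zero_iff] using hdeg s
    exact hp.ne_zero (congrFun (vecMul_injective_iff.2 hB.linearIndependent
      (hzero.trans (zero_vecMul B).symm)) j)
  refine ⟨_, _, hB.updateRow hp (b := a j - 1) fun s ↦ ?_, ?_⟩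
  · exact natDegree_le_iff_coeff_eq_zero.2 fun n hn ↦
      (degree_lt_iff_coeff_zero _ _).1 (hdeg s) n (by omega)
  · refine Finset.sum_lt_sum (fun i _ ↦ ?_) ⟨j, Finset.mem_univ j, ?_⟩
    · rcases eq_or_ne i j with rfl | hij
      · simp
      · simp [hij]
    · simpa using Nat.pos_of_ne_zero haj

end IsBoundedBasis

lemma exists_isBoundedBasis [Finite σ] (N : Submodule F[X] (σ → F[X])) :
    ∃ (k : ℕ) (B : Matrix (Fin k) σ F[X]) (a : Fin k → ℕ), IsBoundedBasis N B a := by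
  have := Fintype.ofFinite σ
  obtain ⟨k, ⟨b⟩⟩ := Submodule.nonempty_basis_of_pid (Pi.basisFun F[X] σ) N
  let B : Matrix (Fin k) σ F[X] := Matrix.of fun i ↦ (b i : σ → F[X])
  refine ⟨k, B, fun i ↦ Finset.univ.sup fun s ↦ (B i s).natDegree,
    b.linearIndependent.map' N.subtype N.ker_subtype, ?_, fun i s ↦
      Finset.le_sup (f := fun s ↦ (B i s).natDegree) (Finset.mem_univ s)⟩
  have hrow : B.row = N.subtype ∘ b := rfl
  rw [hrow, Set.range_comp, Submodule.span_image, b.span_eq, Submodule.map_top, N.range_subtype]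

theorem exists_isBoundedBasis_hasPredictableDegree [Finite σ] (N : Submodule F[X] (σ → F[X])) :
    ∃ (k : ℕ) (B : Matrix (Fin k) σ F[X]) (a : Fin k → ℕ),
      IsBoundedBasis N B a ∧ HasPredictableDegree B a := by
  obtain ⟨k, B₀, a₀, h₀⟩ := exists_isBoundedBasis N
  obtain ⟨⟨B, a⟩, hB, hmin⟩ := exists_minimalFor_of_wellFoundedLT
    (fun Z : Matrix (Fin k) σ F[X] × (Fin k → ℕ) ↦ IsBoundedBasis N Z.1 Z.2)
    (fun Z ↦ ∑ i, Z.2 i) ⟨(B₀, a₀), h₀⟩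
  refine ⟨k, B, a, hB, by_contra fun h ↦ ?_⟩
  obtain ⟨C, b, hC, hlt⟩ := hB.exists_sum_lt h
  exact hlt.not_ge (hmin (j := (C, b)) hC hlt.le)

end ReducedBasis

section MatrixFactorization

variable {R K ι σ τ : Type*} [CommRing R] [Field K]

lemma mulVec_surjective_of_rank_eq_card [Fintype ι] [Fintype σ] {B : Matrix ι σ K}
    (hB : B.rank = Fintype.card ι) : Function.Surjective B.mulVec :=
  LinearMap.range_eq_top (f := B.mulVecLin).1 <|
    Submodule.eq_top_of_finrank_eq (hB.trans (Module.finrank_fintype_fun_eq_card K).symm)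

lemma exists_mul_eq_one_of_linearIndependent_row [Finite ι] [Fintype σ] [DecidableEq ι]
    {B : Matrix ι σ K} (hB : LinearIndependent K B.row) : ∃ C : Matrix σ ι K, B * C = 1 := by
  have := Fintype.ofFinite ι
  exact mulVec_surjective_iff_exists_right_inverse.1
    (mulVec_surjective_of_rank_eq_card hB.rank_matrix)

variable [Fintype ι]

lemma exists_eq_mul_of_row_mem_span {A : Matrix τ σ R} {B : Matrix ι σ R}
    (h : ∀ t, A.row t ∈ Submodule.span R (Set.range B.row)) : ∃ C : Matrix τ ι R, A = C * B := by
  have hcomb (t : τ) : ∃ c : ι → R, c ᵥ* B = A.row t := by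
    obtain ⟨c, hc⟩ := (Submodule.mem_span_range_iff_exists_fun R).1 (h t)
    exact ⟨c, (vecMul_eq_sum c B).trans hc⟩
  choose C hC using hcomb
  exact ⟨Matrix.of C, Matrix.ext fun t s ↦ (congrFun (hC t) s).symm⟩

lemma mul_left_injective_of_linearIndependent_row {B : Matrix ι σ R}
    (hB : LinearIndependent R B.row) : Function.Injective fun A : Matrix τ ι R ↦ A * B :=
  fun _ _ h ↦ funext fun t ↦ vecMul_injective_iff.2 hB (congrFun h t)

lemma transpose_mul_mul_injective_of_linearIndependent_row {B : Matrix ι σ R}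
    (hB : LinearIndependent R B.row) : Function.Injective fun A : Matrix ι ι R ↦ Bᵀ * A * B := by
  intro A A' h
  have hleft : Bᵀ * A = Bᵀ * A' := mul_left_injective_of_linearIndependent_row hB h
  refine transpose_injective (mul_left_injective_of_linearIndependent_row hB ?_)
  simpa only [transpose_mul, transpose_transpose] using congrArg transpose hleft

end MatrixFactorization

section SaturatedRowModule

variable {R : Type*} (K : Type*) [CommRing R] [Field K] [Algebra R K] {ι σ τ : Type*} [Fintype τ]

/-- The saturated row module of a matrix over a domain `R` with fraction field `K`: the vectors over
`R` that are combinations of the rows with coefficients in `K`. -/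
def saturatedRowModule (P : Matrix τ σ R) : Submodule R (σ → R) :=
  ((LinearMap.range (P.map (algebraMap R K)).vecMulLinear).restrictScalars R).comap
    ((Algebra.linearMap R K).compLeft σ)

variable {K}

lemma mem_saturatedRowModule {P : Matrix τ σ R} {y : σ → R} :
    y ∈ saturatedRowModule K P ↔
      ∃ w : τ → K, w ᵥ* P.map (algebraMap R K) = fun s ↦ algebraMap R K (y s) :=
  Iff.rfl

lemma row_mem_saturatedRowModule (P : Matrix τ σ R) (t : τ) :
    P.row t ∈ saturatedRowModule K P := by
  classical
  exact mem_saturatedRowModule.2 ⟨Pi.single t 1, single_one_vecMul t _⟩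

variable [IsFractionRing R K]

variable (K) in
lemma linearIndependent_row_map_algebraMap {B : Matrix ι σ R} (hB : LinearIndependent R B.row) :
    LinearIndependent K (B.map (algebraMap R K)).row := by
  rw [← LinearIndependent.iff_fractionRing R K]
  exact hB.map' ((Algebra.linearMap R K).compLeft σ) <|
    LinearMap.ker_eq_bot.2 (FaithfulSMul.algebraMap_injective R K).comp_left

variable [Fintype ι] [Fintype σ]

lemma card_le_rank_of_row_mem_saturatedRowModule {P : Matrix τ σ R} {B : Matrix ι σ R}
    (hB : LinearIndependent R B.row) (hmem : ∀ i, B.row i ∈ saturatedRowModule K P) :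
    Fintype.card ι ≤ (P.map (algebraMap R K)).rank := by
  choose W hW using fun i ↦ mem_saturatedRowModule.1 (hmem i)
  have hBW : B.map (algebraMap R K) = Matrix.of W * P.map (algebraMap R K) :=
    funext fun i ↦ (hW i).symm
  calc Fintype.card ι = (B.map (algebraMap R K)).rank :=
        (linearIndependent_row_map_algebraMap K hB).rank_matrix.symm
    _ ≤ (P.map (algebraMap R K)).rank := hBW ▸ rank_mul_le_right _ _

-- By skewness the columns of `P` span the same space over `K` as its rows, so in `P = C * B` the
-- columns of `C` are again combinations of the rows of `B`.
theorem exists_skew_eq_transpose_mul_mul {P : Matrix σ σ R} (hP : Pᵀ = -P) {B : Matrix ι σ R}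
    (hB : LinearIndependent R B.row)
    (hspan : Submodule.span R (Set.range B.row) = saturatedRowModule K P) :
    ∃ Q : Matrix ι ι R, Qᵀ = -Q ∧ P = Bᵀ * Q * B := by
  classical
  obtain ⟨C, hC⟩ := exists_eq_mul_of_row_mem_span (A := P) (B := B)
    fun t ↦ hspan ▸ row_mem_saturatedRowModule P t
  obtain ⟨S, hS⟩ := exists_mul_eq_one_of_linearIndependent_row
    (linearIndependent_row_map_algebraMap K hB)
  have hCS : C.map (algebraMap R K) = P.map (algebraMap R K) * S := by
    rw [hC, Matrix.map_mul, Matrix.mul_assoc, hS, Matrix.mul_one]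
  have hCT : (Cᵀ).map (algebraMap R K) = -Sᵀ * P.map (algebraMap R K) := by
    rw [transpose_map, hCS, transpose_mul, ← transpose_map, hP]
    simp [Matrix.map_neg]
  obtain ⟨Q, hQ⟩ := exists_eq_mul_of_row_mem_span (A := Cᵀ) (B := B) fun i ↦
    hspan ▸ mem_saturatedRowModule.2 ⟨(-Sᵀ) i, (congrFun hCT i).symm⟩
  have hPQ : P = Bᵀ * Qᵀ * B := by rw [hC, ← transpose_mul, ← hQ, transpose_transpose]
  refine ⟨Qᵀ, transpose_mul_mul_injective_of_linearIndependent_row hB ?_, hPQ⟩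
  calc Bᵀ * Qᵀᵀ * B = Pᵀ := by simp only [hPQ, transpose_mul, transpose_transpose, Matrix.mul_assoc]
    _ = Bᵀ * -Qᵀ * B := by rw [hP, hPQ, Matrix.mul_neg, Matrix.neg_mul]

end SaturatedRowModule

section SkewDecomposition

lemma HasPredictableDegree.natDegree_add_add_le {F ι σ : Type*} [Field F] [Fintype ι]
    {B : Matrix ι σ F[X]} {a : ι → ℕ} (hB : HasPredictableDegree B a) {Q : Matrix ι ι F[X]} {d : ℕ}
    (hd : ∀ s t, ((Bᵀ * Q * B) s t).natDegree ≤ d) {i j : ι} (hij : Q i j ≠ 0) :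
    (Q i j).natDegree + a i + a j ≤ d := by
  have hcol (s : σ) : (((fun l ↦ Q l j * X ^ a j) ᵥ* B) s).natDegree ≤ d := by
    have hentry : ((fun l ↦ Q l j * X ^ a j) ᵥ* B) s = (Bᵀ * Q) s j * X ^ a j := by
      simp only [vecMul, dotProduct, mul_apply, transpose_apply, Finset.sum_mul]
      exact Finset.sum_congr rfl fun l _ ↦ by ring
    rcases eq_or_ne ((Bᵀ * Q) s j) 0 with h0 | h0
    · simp [hentry, h0]
    · rw [hentry, natDegree_mul_X_pow _ h0]
      exact hB ((Bᵀ * Q) s) d (hd s) j h0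
  have hdeg := hB _ d hcol i (mul_ne_zero hij (pow_ne_zero _ X_ne_zero))
  rw [natDegree_mul_X_pow _ hij] at hdeg
  omega

lemma eq_zero_of_eq_neg_self {R : Type*} [CommRing R] [NoZeroDivisors R] [NeZero (2 : R)] {x : R}
    (h : x = -x) : x = 0 :=
  (mul_eq_zero.1 (show 2 * x = 0 by linear_combination h)).resolve_left two_ne_zero

lemma neZero_two_of_injective {R S : Type*} [CommRing R] [NeZero (2 : R)] [CommRing S]
    {f : R →+* S} (hf : Function.Injective f) : NeZero (2 : S) :=
  ⟨map_ofNat f 2 ▸ (map_ne_zero_iff f hf).2 two_ne_zero⟩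

lemma det_eq_zero_of_transpose_eq_neg_of_odd {R ι : Type*} [CommRing R] [NoZeroDivisors R]
    [NeZero (2 : R)] [Fintype ι] [DecidableEq ι] {Q : Matrix ι ι R} (hQ : Qᵀ = -Q)
    (hodd : Odd (Fintype.card ι)) : Q.det = 0 := by
  refine eq_zero_of_eq_neg_self ?_
  calc Q.det = (-Q).det := by rw [← hQ, det_transpose]
    _ = -Q.det := by rw [det_neg, hodd.neg_one_pow, neg_one_mul]

lemma rank_lt_card_of_det_eq_zero {K ι : Type*} [Field K] [Fintype ι] [DecidableEq ι]
    {A : Matrix ι ι K} (hA : A.det = 0) : A.rank < Fintype.card ι := by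
  refine A.rank_le_card_width.lt_of_ne fun hrank ↦ ?_
  have hunit : IsUnit A := mulVec_surjective_iff_isUnit.1 (mulVec_surjective_of_rank_eq_card hrank)
  exact ((isUnit_iff_isUnit_det A).1 hunit).ne_zero hA

lemma eq_zero_of_rank_eq_zero {K σ τ : Type*} [Field K] [Fintype σ] {A : Matrix τ σ K}
    (hA : A.rank = 0) : A = 0 := by
  classical
  have hrange : LinearMap.range A.mulVecLin = ⊥ := Submodule.finrank_eq_zero.1 hA
  exact ext_of_mulVec_single fun s ↦ by
    rw [zero_mulVec]
    exact LinearMap.congr_fun (LinearMap.range_eq_bot.1 hrange) (Pi.single s 1)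

lemma rank_le_two_mul_of_transpose_eq_neg {K ι : Type*} [Field K] [NeZero (2 : K)] [Fintype ι]
    {A : Matrix ι ι K} (hA : Aᵀ = -A) {r : ℕ} (hr : Fintype.card ι ≤ 2 * r + 1) :
    A.rank ≤ 2 * r := by
  classical
  rcases hr.lt_or_eq with h | h
  · exact A.rank_le_card_width.trans (by omega)
  · have := rank_lt_card_of_det_eq_zero (det_eq_zero_of_transpose_eq_neg_of_odd hA ⟨r, h⟩)
    omega

/-- The skew-symmetric matrix `u ∧ v = u vᵀ - v uᵀ`. -/
def wedge {R σ : Type*} [CommRing R] (u v : σ → R) : Matrix σ σ R :=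
  vecMulVec u v - vecMulVec v u

section Wedge

variable {R σ : Type*} [CommRing R]

lemma wedge_apply (u v : σ → R) (s t : σ) : wedge u v s t = u s * v t - v s * u t := rfl

lemma transpose_wedge (u v : σ → R) : (wedge u v)ᵀ = -wedge u v := by
  simp [wedge, transpose_vecMulVec]

lemma wedge_add_smul_left {k : Type*} [CommRing k] [Algebra k R] (ε : k)
    (u v w : σ → R) : wedge (u + ε • w) v = wedge u v + ε • wedge w v := by
  ext s t
  simp only [wedge_apply, Matrix.add_apply, Matrix.smul_apply, Pi.add_apply, Pi.smul_apply]
  simp only [Algebra.smul_def]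
  ring

lemma wedge_add_smul_const {k : Type*} [CommRing k] [Algebra k R] (ε : k)
    (u v : σ → R) (p q : R) :
    wedge (fun s ↦ u s + ε • p) (fun s ↦ v s + ε • q) =
      wedge u v + ε • (wedge (fun _ ↦ p) v + wedge u fun _ ↦ q) := by
  ext s t
  simp only [wedge_apply, Matrix.add_apply, Matrix.smul_apply, Algebra.smul_def]
  ring

lemma wedge_sub_smul_self (p : R) (u v : σ → R) :
    wedge u (v - p • u) = wedge u v := by
  ext s t
  simp only [wedge_apply, Pi.sub_apply, Pi.smul_apply, smul_eq_mul]
  ring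

lemma wedge_neg_swap (u v : σ → R) : wedge (-v) u = wedge u v := by
  ext s t
  simp only [wedge_apply, Pi.neg_apply]
  ring

lemma transpose_mul_mul_sub_wedge {n : ℕ} (B : Matrix (Fin (n + 1)) σ R)
    {Q : Matrix (Fin (n + 1)) (Fin (n + 1)) R} (hQ : Qᵀ = -Q) (h00 : Q 0 0 = 0) :
    Bᵀ * Q * B - wedge (B 0) (Q 0 ᵥ* B) =
      (B.submatrix Fin.succ id)ᵀ * Q.submatrix Fin.succ Fin.succ * B.submatrix Fin.succ id := by
  ext s t
  have hcol (i : Fin (n + 1)) : Q i 0 = -Q 0 i := congrFun (congrFun hQ 0) i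
  simp only [Matrix.sub_apply, mul_apply, transpose_apply, wedge_apply, vecMul, dotProduct,
    submatrix_apply, id_eq, Fin.sum_univ_succ, h00, hcol, Finset.sum_add_distrib, Finset.sum_mul,
    Finset.mul_sum, add_mul, mul_add]
  have hrow : ∑ i : Fin n, B 0 s * Q 0 i.succ * B i.succ t =
      ∑ i : Fin n, B 0 s * (Q 0 i.succ * B i.succ t) := by simp only [mul_assoc]
  have hneg : ∑ i : Fin n, B i.succ s * -Q 0 i.succ * B 0 t =
      -∑ i : Fin n, Q 0 i.succ * B i.succ s * B 0 t := by
    rw [← Finset.sum_neg_distrib]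
    exact Finset.sum_congr rfl fun i _ ↦ by ring
  rw [hrow, hneg]
  ring

end Wedge

/-- The wedges `u ∧ v` of polynomial vectors with `deg u ≤ a` and `deg v ≤ b`. -/
def wedgesOfDegreeLE {R : Type*} (σ : Type*) [CommRing R] (a b : ℕ) : Set (Matrix σ σ R[X]) :=
  {W | ∃ u v : σ → R[X], (∀ s, (u s).natDegree ≤ a) ∧ (∀ s, (v s).natDegree ≤ b) ∧ W = wedge u v}

lemma wedgesOfDegreeLE_swap {R σ : Type*} [CommRing R] (a b : ℕ) :
    wedgesOfDegreeLE (R := R) σ a b ⊆ wedgesOfDegreeLE σ b a := by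
  rintro _ ⟨u, v, hu, hv, rfl⟩
  exact ⟨-v, u, by simpa using hv, hu, (wedge_neg_swap u v).symm⟩

section PolynomialDecomposition

variable {F σ : Type*} [Field F]

lemma natDegree_le_of_mem_wedgesOfDegreeLE {a b : ℕ} {W : Matrix σ σ F[X]}
    (hW : W ∈ wedgesOfDegreeLE σ a b) (s t : σ) : (W s t).natDegree ≤ a + b := by
  obtain ⟨u, v, hu, hv, rfl⟩ := hW
  have := hu s; have := hu t; have := hv s; have := hv t
  refine (natDegree_sub_le _ _).trans (max_le ?_ ?_) <;> refine natDegree_mul_le.trans ?_ <;> omega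

lemma zero_mem_wedgesOfDegreeLE (a b : ℕ) : (0 : Matrix σ σ F[X]) ∈ wedgesOfDegreeLE σ a b :=
  ⟨0, 0, by simp, by simp, by ext; simp [wedge_apply]⟩

lemma wedge_row_vecMul_mem {n d : ℕ} {B : Matrix (Fin (n + 1)) σ F[X]} {a : Fin (n + 1) → ℕ}
    (hB : HasPredictableDegree B a) (ha : ∀ i s, (B i s).natDegree ≤ a i)
    {Q : Matrix (Fin (n + 1)) (Fin (n + 1)) F[X]} (hd : ∀ s t, ((Bᵀ * Q * B) s t).natDegree ≤ d) :
    ∃ e ≤ d, wedge (B 0) (Q 0 ᵥ* B) ∈ wedgesOfDegreeLE σ e (d - e) := by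
  by_cases h0 : Q 0 = 0
  · refine ⟨0, d.zero_le, ?_⟩
    rw [h0, zero_vecMul]
    convert zero_mem_wedgesOfDegreeLE 0 (d - 0) using 1
    ext; simp [wedge_apply]
  · obtain ⟨j, hj⟩ := Function.ne_iff.1 h0
    have hj := hB.natDegree_add_add_le hd hj
    refine ⟨a 0, by omega, B 0, Q 0 ᵥ* B, ha 0, fun s ↦ ?_, rfl⟩
    refine natDegree_sum_le_of_forall_le Finset.univ (fun i ↦ Q 0 i * B i s) fun i _ ↦ ?_
    rcases eq_or_ne (Q 0 i) 0 with hi | hi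
    · simp [hi]
    · have := hB.natDegree_add_add_le hd hi
      have := ha i s
      exact natDegree_mul_le.trans (by omega)

variable [Fintype σ] [NeZero (2 : F)] (K : Type*) [Field K] [Algebra F[X] K] [IsFractionRing F[X] K]

lemma exists_wedge_rank_sub_le {P : Matrix σ σ F[X]} (hP : Pᵀ = -P) {d r : ℕ}
    (hd : ∀ s t, (P s t).natDegree ≤ d)
    (hr : (P.map (algebraMap F[X] K)).rank ≤ 2 * (r + 1)) :
    ∃ a ≤ d, ∃ W ∈ wedgesOfDegreeLE σ a (d - a),
      ((P - W).map (algebraMap F[X] K)).rank ≤ 2 * r := by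
  have : NeZero (2 : F[X]) := neZero_two_of_injective (C_injective (R := F))
  have : NeZero (2 : K) := neZero_two_of_injective (FaithfulSMul.algebraMap_injective F[X] K)
  obtain ⟨k, B, a, hB, hpred⟩ :=
    exists_isBoundedBasis_hasPredictableDegree (saturatedRowModule K P)
  obtain ⟨Q, hQ, rfl⟩ := exists_skew_eq_transpose_mul_mul hP hB.linearIndependent hB.span_eq
  have hk : k ≤ 2 * (r + 1) := by
    simpa using (card_le_rank_of_row_mem_saturatedRowModule hB.linearIndependent
      fun i ↦ hB.span_eq.le (Submodule.subset_span ⟨i, rfl⟩)).trans hr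
  rcases k with _ | n
  · exact ⟨0, d.zero_le, 0, zero_mem_wedgesOfDegreeLE _ _, by simp⟩
  · obtain ⟨e, he, hW⟩ := wedge_row_vecMul_mem hpred hB.natDegree_le hd
    refine ⟨e, he, _, hW, ?_⟩
    rw [transpose_mul_mul_sub_wedge B hQ (eq_zero_of_eq_neg_self (congrFun (congrFun hQ 0) 0)),
      Matrix.map_mul, Matrix.map_mul]
    refine (rank_mul_le_left _ _).trans ((rank_mul_le_right _ _).trans ?_)
    refine rank_le_two_mul_of_transpose_eq_neg ?_ (by simp only [Fintype.card_fin]; omega)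
    rw [← transpose_map, transpose_submatrix, hQ]
    ext i j
    simp

theorem exists_eq_sum_wedge {d r : ℕ} {P : Matrix σ σ F[X]} (hP : Pᵀ = -P)
    (hd : ∀ s t, (P s t).natDegree ≤ d) (hr : (P.map (algebraMap F[X] K)).rank ≤ 2 * r) :
    ∃ W : Fin r → Matrix σ σ F[X],
      (∀ i, ∃ a ≤ d, W i ∈ wedgesOfDegreeLE σ a (d - a)) ∧ P = ∑ i, W i := by
  induction r generalizing P with
  | zero =>
    have hzero : P.map (algebraMap F[X] K) = 0 := eq_zero_of_rank_eq_zero (by simpa using hr)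
    refine ⟨Fin.elim0, fun i ↦ i.elim0, map_injective (FaithfulSMul.algebraMap_injective F[X] K) ?_⟩
    simp [hzero]
  | succ r ih =>
    obtain ⟨a, ha, W₀, hW₀, hrank⟩ := exists_wedge_rank_sub_le K hP hd hr
    have hskew : (P - W₀)ᵀ = -(P - W₀) := by
      obtain ⟨u, v, -, -, rfl⟩ := hW₀
      rw [transpose_sub, hP, transpose_wedge, neg_sub, sub_neg_eq_add, neg_add_eq_sub]
    have hdeg (s t : σ) : ((P - W₀) s t).natDegree ≤ d :=
      (natDegree_sub_le _ _).trans <| max_le (hd s t) <|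
        (natDegree_le_of_mem_wedgesOfDegreeLE hW₀ s t).trans (by omega)
    obtain ⟨W, hW, hsum⟩ := ih hskew hdeg hrank
    refine ⟨Fin.cons W₀ W, Fin.cases ⟨a, ha, hW₀⟩ hW, ?_⟩
    rw [Fin.sum_univ_succ, Fin.cons_zero, ← sub_eq_iff_eq_add', hsum]
    rfl

end PolynomialDecomposition

end SkewDecomposition

section CoefficientwiseClosure

open Filter Topology

/-- `coeffTuple` as a linear map. -/
noncomputable def coeffTupleLinear (m d : ℕ) :
    Matrix (Fin m) (Fin m) ℂ[X] →ₗ[ℂ] Fin (d + 1) → Matrix (Fin m) (Fin m) ℂ :=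
  LinearMap.pi fun i ↦ (lcoeff ℂ i).mapMatrix

lemma coe_coeffTupleLinear (m d : ℕ) : ⇑(coeffTupleLinear m d) = coeffTuple m d := rfl

/-- The matrix polynomials whose coefficients of degree at most `d` are limits of those of matrix
polynomials in `S`. -/
def coeffClosure {m : ℕ} (d : ℕ) (S : Set (Matrix (Fin m) (Fin m) ℂ[X])) :
    Set (Matrix (Fin m) (Fin m) ℂ[X]) :=
  coeffTuple m d ⁻¹' closure (coeffTuple m d '' S)

variable {m d : ℕ} {S T : Set (Matrix (Fin m) (Fin m) ℂ[X])}

lemma subset_coeffClosure : S ⊆ coeffClosure d S :=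
  fun _ hP ↦ subset_closure (Set.mem_image_of_mem _ hP)

lemma coeffClosure_subset (h : S ⊆ coeffClosure d T) : coeffClosure d S ⊆ coeffClosure d T :=
  Set.preimage_mono (closure_minimal (Set.image_subset_iff.2 h) isClosed_closure)

lemma sum_mem_coeffClosure {ι : Type*} [Fintype ι] {W : ι → Matrix (Fin m) (Fin m) ℂ[X]}
    (hW : ∀ i, W i ∈ coeffClosure d S) :
    ∑ i, W i ∈ coeffClosure d {P | ∃ V : ι → _, (∀ i, V i ∈ S) ∧ P = ∑ i, V i} := by
  have hcont : Continuous fun t : ι → Fin (d + 1) → Matrix (Fin m) (Fin m) ℂ ↦ ∑ i, t i := by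
    fun_prop
  have hpi : (fun i ↦ coeffTuple m d (W i)) ∈
      closure (Set.univ.pi fun _ : ι ↦ coeffTuple m d '' S) := by
    rw [closure_pi_set]
    exact fun i _ ↦ hW i
  rw [coeffClosure, Set.mem_preimage, ← coe_coeffTupleLinear, map_sum]
  refine closure_mono ?_ (image_closure_subset_closure_image hcont ⟨_, hpi, rfl⟩)
  rintro _ ⟨t, ht, rfl⟩
  choose V hV ht using fun i ↦ ht i trivial
  exact ⟨∑ i, V i, ⟨V, hV, rfl⟩, by simp only [map_sum, coe_coeffTupleLinear, ht]⟩

lemma mem_coeffClosure_of_eventually_add_smul_mem {A B : Matrix (Fin m) (Fin m) ℂ[X]}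
    (h : ∀ᶠ ε : ℂ in 𝓝[≠] 0, A + ε • B ∈ S) : A ∈ coeffClosure d S := by
  have hcont : Continuous fun ε : ℂ ↦ coeffTuple m d A + ε • coeffTuple m d B := by fun_prop
  have hlim := (hcont.tendsto 0).mono_left (nhdsWithin_le_nhds (s := {0}ᶜ))
  rw [zero_smul, add_zero] at hlim
  refine mem_closure_of_tendsto hlim (h.mono fun ε hε ↦ ⟨_, hε, ?_⟩)
  rw [← coe_coeffTupleLinear, map_add, map_smul]

lemma natDegree_sub_coeff_smul_X_pow_le {R : Type*} [Ring R] {f : R[X]} {n : ℕ}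
    (hf : f.natDegree ≤ n + 1) : (f - f.coeff (n + 1) • X ^ (n + 1)).natDegree ≤ n := by
  rw [natDegree_le_iff_coeff_eq_zero]
  intro k hk
  rcases eq_or_ne k (n + 1) with rfl | hne
  · simp
  · simp [coeff_X_pow, hne, coeff_eq_zero_of_natDegree_lt (show f.natDegree < k by omega)]

lemma sub_inv_smul_X_pow_mul_add_smul {k : Type*} [Field k] {ε : k} (hε : ε ≠ 0) {a b : ℕ}
    (hab : a ≤ b) (f g : k[X]) (c : k) :
    g - (ε⁻¹ • X ^ (b - a)) * (f + ε • c • X ^ (a + 1)) =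
      g - c • X ^ (b + 1) - ε⁻¹ • (X ^ (b - a) * f) := by
  have hC : C ε⁻¹ * C ε = 1 := by rw [← C_mul, inv_mul_cancel₀ hε, C_1]
  have hX : (X : k[X]) ^ (b + 1) = X ^ (b - a) * X ^ (a + 1) := by
    rw [← pow_add, ← add_assoc, Nat.sub_add_cancel hab]
  simp only [smul_eq_C_mul, hX]
  linear_combination -(C c * X ^ (b - a) * X ^ (a + 1)) * hC

-- With `w = u + ε X ^ (a + 1) c`, where `c` is the coefficient of `X ^ (b + 1)` in `v`, subtracting
-- `ε⁻¹ X ^ (b - a) w` from `v` cancels its leading term and does not change `w ∧ v`.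
lemma wedgesOfDegreeLE_subset_coeffClosure_succ {a b : ℕ} (hab : a ≤ b) :
    wedgesOfDegreeLE (Fin m) a (b + 1) ⊆ coeffClosure d (wedgesOfDegreeLE (Fin m) (a + 1) b) := by
  rintro _ ⟨u, v, hu, hv, rfl⟩
  let w : Fin m → ℂ[X] := fun s ↦ (v s).coeff (b + 1) • X ^ (a + 1)
  refine mem_coeffClosure_of_eventually_add_smul_mem (B := wedge w v) ?_
  filter_upwards [self_mem_nhdsWithin] with ε (hε : ε ≠ 0)
  rw [← wedge_add_smul_left, ← wedge_sub_smul_self (ε⁻¹ • X ^ (b - a))]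
  refine ⟨_, _, fun s ↦ ?_, fun s ↦ ?_, rfl⟩
  · have hw : (w s).natDegree ≤ a + 1 := (natDegree_smul_le _ _).trans (natDegree_X_pow_le _)
    exact natDegree_add_le_of_degree_le ((hu s).trans a.le_succ) ((natDegree_smul_le _ _).trans hw)
  · have hcancel := sub_inv_smul_X_pow_mul_add_smul hε hab (u s) (v s) ((v s).coeff (b + 1))
    refine (congrArg natDegree hcancel).trans_le <| (natDegree_sub_le _ _).trans <|
      max_le (natDegree_sub_coeff_smul_X_pow_le (hv s)) ?_
    refine (natDegree_smul_le _ _).trans (natDegree_mul_le.trans ?_)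
    have := hu s
    rw [natDegree_X_pow]
    omega

lemma wedgesOfDegreeLE_subset_coeffClosure_add {a b n : ℕ} (h : a + n ≤ b + 1) :
    wedgesOfDegreeLE (Fin m) a (b + n) ⊆ coeffClosure d (wedgesOfDegreeLE (Fin m) (a + n) b) := by
  induction n generalizing a with
  | zero => exact subset_coeffClosure
  | succ n ih =>
    have hab : a ≤ b + n := by omega
    refine (wedgesOfDegreeLE_subset_coeffClosure_succ hab).trans (coeffClosure_subset ?_)
    rw [add_comm n 1, ← add_assoc]
    exact ih (by omega)

lemma wedgesOfDegreeLE_subset_coeffClosure_ceil {a : ℕ} (ha : a ≤ d) :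
    wedgesOfDegreeLE (Fin m) a (d - a) ⊆
      coeffClosure d (wedgesOfDegreeLE (Fin m) ((d + 1) / 2) (d - (d + 1) / 2)) := by
  have balance {a : ℕ} (ha : a ≤ (d + 1) / 2) : wedgesOfDegreeLE (Fin m) a (d - a) ⊆
      coeffClosure d (wedgesOfDegreeLE (Fin m) ((d + 1) / 2) (d - (d + 1) / 2)) := by
    obtain ⟨n, hn⟩ := Nat.exists_eq_add_of_le ha
    rw [hn, show d - a = d - (a + n) + n by omega]
    exact wedgesOfDegreeLE_subset_coeffClosure_add (by omega)
  rcases le_total a ((d + 1) / 2) with h | h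
  · exact balance h
  · refine (wedgesOfDegreeLE_swap a (d - a)).trans ?_
    simpa only [Nat.sub_sub_self ha] using balance (a := d - a) (by omega)

/-- The degree of a vector of polynomials, `0` for the zero vector. -/
def vecDegree {R σ : Type*} [CommRing R] [Fintype σ] (u : σ → R[X]) : ℕ :=
  Finset.univ.sup fun s ↦ (u s).natDegree

lemma natDegree_le_vecDegree {R σ : Type*} [CommRing R] [Fintype σ] (u : σ → R[X]) (s : σ) :
    (u s).natDegree ≤ vecDegree u :=
  Finset.le_sup (f := fun s ↦ (u s).natDegree) (Finset.mem_univ s)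

/-- The wedges `u ∧ v` of polynomial vectors with `deg u = a` and `deg v = b`. -/
def wedgesOfDegree {R : Type*} (σ : Type*) [CommRing R] [Fintype σ] (a b : ℕ) :
    Set (Matrix σ σ R[X]) :=
  {W | ∃ u v : σ → R[X], vecDegree u = a ∧ vecDegree v = b ∧ W = wedge u v}

lemma wedgesOfDegree_subset_wedgesOfDegreeLE {R σ : Type*} [CommRing R] [Fintype σ] (a b : ℕ) :
    wedgesOfDegree (R := R) σ a b ⊆ wedgesOfDegreeLE σ a b := by
  rintro _ ⟨u, v, rfl, rfl, rfl⟩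
  exact ⟨u, v, natDegree_le_vecDegree u, natDegree_le_vecDegree v, rfl⟩

lemma eventually_vecDegree_add_smul_X_pow_eq {σ : Type*} [Fintype σ] [Nonempty σ] {u : σ → ℂ[X]}
    {a : ℕ} (hu : ∀ s, (u s).natDegree ≤ a) :
    ∀ᶠ ε : ℂ in 𝓝[≠] 0, vecDegree (fun s ↦ u s + ε • X ^ a) = a := by
  obtain ⟨s⟩ := ‹Nonempty σ›
  have hne : ∀ᶠ ε : ℂ in 𝓝[≠] 0, ε ≠ -(u s).coeff a :=
    nhdsNE_le_cofinite 0 (Set.finite_singleton _).compl_mem_cofinite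
  filter_upwards [hne] with ε hε
  refine le_antisymm (Finset.sup_le fun t _ ↦ ?_)
    (le_trans ?_ (natDegree_le_vecDegree (fun s ↦ u s + ε • X ^ a) s))
  · exact natDegree_add_le_of_degree_le (hu t)
      ((natDegree_smul_le _ _).trans (natDegree_X_pow_le a))
  · refine le_natDegree_of_ne_zero fun h0 ↦ hε (eq_neg_of_add_eq_zero_right ?_)
    simpa using h0

lemma wedgesOfDegreeLE_subset_coeffClosure_wedgesOfDegree [NeZero m] (a b : ℕ) :
    wedgesOfDegreeLE (Fin m) a b ⊆ coeffClosure d (wedgesOfDegree (Fin m) a b) := by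
  rintro _ ⟨u, v, hu, hv, rfl⟩
  refine mem_coeffClosure_of_eventually_add_smul_mem
    (B := wedge (fun _ ↦ X ^ a) v + wedge u fun _ ↦ X ^ b) ?_
  filter_upwards [eventually_vecDegree_add_smul_X_pow_eq hu,
    eventually_vecDegree_add_smul_X_pow_eq hv] with ε hεu hεv
  exact ⟨_, _, hεu, hεv, (wedge_add_smul_const ..).symm⟩

end CoefficientwiseClosure

section Aset

variable {m r : ℕ}

/-- The inclusion of the indices of the first `r` columns of an `m × 2r` matrix. -/
def firstHalf (i : Fin r) : Fin (2 * r) := Fin.castLE (by omega) i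

lemma val_firstHalf (i : Fin r) : (firstHalf i : ℕ) = i := rfl

lemma sum_eq_sum_firstHalf_add_rev {M : Type*} [AddCommMonoid M] (f : Fin (2 * r) → M) :
    ∑ k, f k = ∑ i : Fin r, (f (firstHalf i) + f (firstHalf i).rev) := by
  rw [← Fin.sum_congr' f (two_mul r).symm, Fin.sum_univ_add, Finset.sum_add_distrib]
  congr 1
  rw [← Equiv.sum_comp Fin.revPerm]
  congr! 2 with i
  ext
  simp only [Fin.revPerm_apply, Fin.val_cast, Fin.val_natAdd, Fin.val_rev, val_firstHalf]
  omega

lemma Jmat_apply (k l : Fin (2 * r)) :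
    Jmat r k l = if l = k.rev then if (k : ℕ) < r then 1 else -1 else 0 := by
  simp only [Jmat, of_apply, Fin.ext_iff, Fin.val_rev]
  split_ifs <;> first | rfl | omega

lemma mul_Jmat_mul_transpose_eq_sum_wedge (L : Matrix (Fin m) (Fin (2 * r)) ℂ[X]) :
    L * Jmat r * Lᵀ = ∑ i : Fin r, wedge (L.col (firstHalf i)) (L.col (firstHalf i).rev) := by
  ext1 s t
  have hrow (k : Fin (2 * r)) :
      (Jmat r * Lᵀ) k t = (if (k : ℕ) < r then 1 else -1) * L t k.rev := by
    simp [mul_apply, Jmat_apply]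
  simp only [Matrix.mul_assoc, mul_apply (M := L), hrow, sum_eq_sum_firstHalf_add_rev,
    Matrix.sum_apply, wedge_apply, col_apply]
  refine Finset.sum_congr rfl fun i _ ↦ ?_
  have hrev : ¬ ((firstHalf i).rev : ℕ) < r := by
    rw [Fin.val_rev, val_firstHalf]
    omega
  rw [if_pos (show (firstHalf i : ℕ) < r from i.2), if_neg hrev, Fin.rev_rev]
  ring

lemma exists_col_firstHalf_eq {R : Type*} (u v : Fin r → Fin m → R) :
    ∃ L : Matrix (Fin m) (Fin (2 * r)) R,
      ∀ i, L.col (firstHalf i) = u i ∧ L.col (firstHalf i).rev = v i := by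
  refine ⟨Matrix.of fun s k ↦
    if h : (k : ℕ) < r then u ⟨k, h⟩ s else v ⟨k.rev, by rw [Fin.val_rev]; omega⟩ s,
    fun i ↦ ⟨funext fun s ↦ ?_, funext fun s ↦ ?_⟩⟩
  · simp [val_firstHalf]
  · have hrev : ¬ ((firstHalf i).rev : ℕ) < r := by
      rw [Fin.val_rev, val_firstHalf]
      omega
    simp only [col_apply, of_apply, dif_neg hrev, Fin.rev_rev, val_firstHalf]

lemma mem_Aset_iff {d : ℕ} {ds : Fin r → ℕ} {P : Matrix (Fin m) (Fin m) ℂ[X]} :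
    P ∈ Aset m r d ds ↔ ∃ W : Fin r → Matrix (Fin m) (Fin m) ℂ[X],
      (∀ i, W i ∈ wedgesOfDegree (Fin m) (ds i) (d - ds i)) ∧ P = ∑ i, W i := by
  constructor
  · rintro ⟨L, hL, rfl⟩
    exact ⟨_, fun i ↦ ⟨_, _, (hL i).1, (hL i).2, rfl⟩, mul_Jmat_mul_transpose_eq_sum_wedge L⟩
  · rintro ⟨W, hW, rfl⟩
    choose u v hu hv hW using hW
    obtain ⟨L, hL⟩ := exists_col_firstHalf_eq u v
    refine ⟨L, fun i ↦ ⟨?_, ?_⟩, ?_⟩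
    · exact (congrArg vecDegree (hL i).1).trans (hu i)
    · exact (congrArg vecDegree (hL i).2).trans (hv i)
    · simp only [mul_Jmat_mul_transpose_eq_sum_wedge, hL, hW]

theorem mem_coeffClosure_Aset [NeZero m] {d : ℕ} {P : Matrix (Fin m) (Fin m) ℂ[X]} (hP : Pᵀ = -P)
    (hd : ∀ i j, (P i j).natDegree ≤ d) (hr : normalRank P ≤ 2 * r) :
    P ∈ coeffClosure d (Aset m r d fun _ ↦ (d + 1) / 2) := by
  obtain ⟨W, hW, rfl⟩ := exists_eq_sum_wedge (RatFunc ℂ) hP hd hr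
  have hWclosure (i : Fin r) :
      W i ∈ coeffClosure d (wedgesOfDegree (Fin m) ((d + 1) / 2) (d - (d + 1) / 2)) := by
    obtain ⟨a, ha, hWi⟩ := hW i
    exact coeffClosure_subset (wedgesOfDegreeLE_subset_coeffClosure_wedgesOfDegree _ _)
      (wedgesOfDegreeLE_subset_coeffClosure_ceil ha hWi)
  have hAset : Aset m r d (fun _ ↦ (d + 1) / 2) = {P | ∃ V : Fin r → _,
      (∀ i, V i ∈ wedgesOfDegree (Fin m) ((d + 1) / 2) (d - (d + 1) / 2)) ∧ P = ∑ i, V i} :=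
    Set.ext fun _ ↦ mem_Aset_iff
  exact hAset ▸ sum_mem_coeffClosure hWclosure

end Aset

section Closedness

section Minors

lemma det_submatrix_map {R S ι σ τ : Type*} [CommRing R] [CommRing S] [Fintype τ] [DecidableEq τ]
    (φ : R →+* S) (P : Matrix ι σ R) (f : τ → ι) (g : τ → σ) :
    ((P.map φ).submatrix f g).det = φ (P.submatrix f g).det :=
  (φ.map_det _).symm

variable {K ι σ : Type*} [Field K] [Finite ι] [Fintype σ]

lemma exists_linearIndependent_row_submatrix {A : Matrix ι σ K} {k : ℕ} (hk : k ≤ A.rank) :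
    ∃ f : Fin k → ι, LinearIndependent K (A.submatrix f id).row := by
  rw [rank_eq_finrank_span_row] at hk
  obtain ⟨b, hb, -, hli⟩ := Submodule.exists_fun_fin_finrank_span_eq K (Set.range A.row)
  choose g hg using hb
  refine ⟨fun i ↦ g (Fin.castLE hk i), ?_⟩
  have hrow : (A.submatrix (fun i ↦ g (Fin.castLE hk i)) id).row = b ∘ Fin.castLE hk :=
    funext fun i ↦ hg (Fin.castLE hk i)
  exact hrow ▸ hli.comp _ (Fin.castLE_injective hk)

lemma exists_submatrix_det_ne_zero {A : Matrix ι σ K} {k : ℕ} (hk : k ≤ A.rank) :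
    ∃ (f : Fin k → ι) (g : Fin k → σ), (A.submatrix f g).det ≠ 0 := by
  obtain ⟨f, hf⟩ := exists_linearIndependent_row_submatrix hk
  have hrank : k ≤ (A.submatrix f id)ᵀ.rank := by
    rw [rank_transpose, hf.rank_matrix, Fintype.card_fin]
  obtain ⟨g, hg⟩ := exists_linearIndependent_row_submatrix hrank
  refine ⟨f, g, ?_⟩
  rw [← det_transpose]
  exact ((isUnit_iff_isUnit_det _).1 (linearIndependent_rows_iff_isUnit.1 hg)).ne_zero

lemma rank_le_iff_submatrix_det_eq_zero {A : Matrix ι σ K} {k : ℕ} :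
    A.rank ≤ k ↔ ∀ (f : Fin (k + 1) → ι) (g : Fin (k + 1) → σ), (A.submatrix f g).det = 0 := by
  refine ⟨fun hA f g ↦ by_contra fun hdet ↦ ?_, fun hA ↦ by_contra fun hrank ↦ ?_⟩
  · have := (rank_of_det_ne_zero hdet).symm.trans_le (rank_submatrix_le A f g)
    rw [Fintype.card_fin] at this
    omega
  · obtain ⟨f, g, hdet⟩ := exists_submatrix_det_ne_zero (not_le.1 hrank)
    exact hdet (hA f g)

lemma isClosed_setOf_rank_le [TopologicalSpace K] [IsTopologicalRing K] [T1Space K] (k : ℕ) :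
    IsClosed {A : Matrix ι σ K | A.rank ≤ k} := by
  simp only [rank_le_iff_submatrix_det_eq_zero, Set.ofPred_forall]
  exact isClosed_iInter fun f ↦ isClosed_iInter fun g ↦
    isClosed_singleton.preimage (continuous_id.matrix_submatrix f g).matrix_det

lemma rank_map_algebraMap_le_iff_forall_eval {F : Type*} [Field F] [Infinite F]
    [Algebra F[X] K] [IsFractionRing F[X] K] {P : Matrix ι σ F[X]} {k : ℕ} :
    (P.map (algebraMap F[X] K)).rank ≤ k ↔ ∀ z, (P.map (evalRingHom z)).rank ≤ k := by
  simp only [rank_le_iff_submatrix_det_eq_zero, det_submatrix_map,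
    map_eq_zero_iff _ (FaithfulSMul.algebraMap_injective F[X] K)]
  refine ⟨fun h z f g ↦ by rw [h f g, map_zero], fun h f g ↦ Polynomial.funext fun z ↦ ?_⟩
  rw [eval_zero]
  exact h z f g

end Minors

variable {m d : ℕ}

/-- The matrix polynomial of grade `d` with prescribed coefficient matrices. -/
noncomputable def ofCoeffTuple (T : Fin (d + 1) → Matrix (Fin m) (Fin m) ℂ) :
    Matrix (Fin m) (Fin m) ℂ[X] :=
  Matrix.of fun s t ↦ ∑ i, C (T i s t) * X ^ (i : ℕ)

lemma natDegree_ofCoeffTuple_le (T : Fin (d + 1) → Matrix (Fin m) (Fin m) ℂ) (s t : Fin m) :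
    (ofCoeffTuple T s t).natDegree ≤ d :=
  natDegree_sum_le_of_forall_le Finset.univ (fun i : Fin (d + 1) ↦ C (T i s t) * X ^ (i : ℕ))
    fun i _ ↦ (natDegree_C_mul_X_pow_le _ _).trans i.is_le

lemma coeffTuple_ofCoeffTuple (T : Fin (d + 1) → Matrix (Fin m) (Fin m) ℂ) :
    coeffTuple m d (ofCoeffTuple T) = T := by
  ext i s t
  simp [coeffTuple, ofCoeffTuple, finsetSum_coeff, coeff_X_pow, Fin.val_inj]

lemma ofCoeffTuple_coeffTuple {P : Matrix (Fin m) (Fin m) ℂ[X]}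
    (hd : ∀ s t, (P s t).natDegree ≤ d) : ofCoeffTuple (coeffTuple m d P) = P := by
  ext1 s t
  refine (Fin.sum_univ_eq_sum_range (fun i ↦ C ((P s t).coeff i) * X ^ i) (d + 1)).trans ?_
  exact ((P s t).as_sum_range_C_mul_X_pow' (Nat.lt_succ_of_le (hd s t))).symm

lemma continuous_map_eval_ofCoeffTuple (z : ℂ) :
    Continuous fun T : Fin (d + 1) → Matrix (Fin m) (Fin m) ℂ ↦
      (ofCoeffTuple T).map (evalRingHom z) := by
  refine continuous_matrix fun s t ↦ ?_
  simp only [ofCoeffTuple, map_apply, of_apply, coe_evalRingHom, eval_finsetSum, eval_mul, eval_C,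
    eval_pow, eval_X]
  fun_prop

lemma transpose_eq_neg_iff_forall_eval {R σ : Type*} [CommRing R] [IsDomain R] [Infinite R]
    {P : Matrix σ σ R[X]} :
    Pᵀ = -P ↔ ∀ z, (P.map (evalRingHom z))ᵀ = -P.map (evalRingHom z) := by
  simp only [← Matrix.ext_iff, transpose_apply, Matrix.neg_apply, map_apply, coe_evalRingHom]
  refine ⟨fun h z s t ↦ by rw [h s t, eval_neg], fun h s t ↦ Polynomial.funext fun z ↦ ?_⟩
  rw [h z s t, eval_neg]

theorem isClosed_coeffTuple_image_skew_of_normalRank_le (m d k : ℕ) :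
    IsClosed (coeffTuple m d '' {P : Matrix (Fin m) (Fin m) ℂ[X] |
      Pᵀ = -P ∧ (∀ i j, (P i j).natDegree ≤ d) ∧ normalRank P ≤ k}) := by
  have himage : coeffTuple m d '' {P | Pᵀ = -P ∧ (∀ i j, (P i j).natDegree ≤ d) ∧
      normalRank P ≤ k} = ⋂ z : ℂ, (fun T ↦ (ofCoeffTuple T).map (evalRingHom z)) ⁻¹'
        ({A | Aᵀ = -A} ∩ {A | A.rank ≤ k}) := by
    ext T
    simp only [Set.mem_iInter, Set.mem_preimage, Set.mem_inter_iff, Set.mem_ofPred_eq, forall_and,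
      ← transpose_eq_neg_iff_forall_eval,
      ← rank_map_algebraMap_le_iff_forall_eval (K := RatFunc ℂ)]
    constructor
    · rintro ⟨P, ⟨hP, hd, hk⟩, rfl⟩
      exact (ofCoeffTuple_coeffTuple hd).symm ▸ ⟨hP, hk⟩
    · rintro ⟨hT, hk⟩
      exact ⟨_, ⟨hT, natDegree_ofCoeffTuple_le T, hk⟩, coeffTuple_ofCoeffTuple T⟩
  rw [himage]
  exact isClosed_iInter fun z ↦ (IsClosed.inter (isClosed_eq (by fun_prop) (by fun_prop))
    (isClosed_setOf_rank_le k)).preimage (continuous_map_eval_ofCoeffTuple z)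

lemma normalRank_mul_le {k n : ℕ} (A : Matrix (Fin m) (Fin k) ℂ[X])
    (B : Matrix (Fin k) (Fin n) ℂ[X]) : normalRank (A * B) ≤ k := by
  rw [normalRank, Matrix.map_mul]
  exact (rank_mul_le_left _ _).trans (rank_le_width _)

theorem Aset_subset_skew_of_normalRank_le {r : ℕ} {ds : Fin r → ℕ} (hds : ∀ i, ds i ≤ d) :
    Aset m r d ds ⊆
      {P | Pᵀ = -P ∧ (∀ i j, (P i j).natDegree ≤ d) ∧ normalRank P ≤ 2 * r} := by
  intro P hP
  obtain ⟨W, hW, hsum⟩ := mem_Aset_iff.1 hP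
  replace hW (i : Fin r) := wedgesOfDegree_subset_wedgesOfDegreeLE _ _ (hW i)
  refine ⟨?_, fun s t ↦ ?_, ?_⟩
  · have hskew (i : Fin r) : (W i)ᵀ = -W i := by
      obtain ⟨u, v, -, -, huv⟩ := hW i
      rw [huv, transpose_wedge]
    rw [hsum, transpose_sum, ← Finset.sum_neg_distrib]
    exact Finset.sum_congr rfl fun i _ ↦ hskew i
  · rw [hsum, Matrix.sum_apply]
    exact natDegree_sum_le_of_forall_le Finset.univ (fun i ↦ W i s t) fun i _ ↦
      (natDegree_le_of_mem_wedgesOfDegreeLE (hW i) s t).trans (Nat.add_sub_cancel' (hds i)).le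
  · obtain ⟨L, -, rfl⟩ := hP
    exact Matrix.mul_assoc L (Jmat r) Lᵀ ▸ normalRank_mul_le L (Jmat r * Lᵀ)

end Closedness

theorem closure_Aset_ceil_eq_skew_symmetric_bounded_rank_general (m r d : ℕ) (hm : 0 < m) :
    closure (coeffTuple m d '' Aset m r d fun _ => (d + 1) / 2) =
      coeffTuple m d '' {P : Matrix (Fin m) (Fin m) (Polynomial ℂ) |
        Pᵀ = -P ∧ (∀ i j, (P i j).natDegree ≤ d) ∧ normalRank P ≤ 2 * r} := by
  have : NeZero m := ⟨hm.ne'⟩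
  refine Set.Subset.antisymm ?_ ?_
  · exact closure_minimal
      (Set.image_mono (Aset_subset_skew_of_normalRank_le fun _ ↦ by omega))
      (isClosed_coeffTuple_image_skew_of_normalRank_le m d (2 * r))
  · rintro _ ⟨P, ⟨hP, hd, hr⟩, rfl⟩
    exact mem_coeffClosure_Aset hP hd hr

/-- The closure of `A(⌈d/2⌉, …, ⌈d/2⌉)`, with respect to coefficientwise convergence,
equals the set of all m×m skew-symmetric matrix polynomials of grade `d` with normal
rank at most `2r`. -/
theorem closure_Aset_ceil_eq_skew_symmetric_bounded_rank (m r d : ℕ)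
    (hm : 2 < m) (hd : 1 ≤ d) (h2 : 2 ≤ 2 * r) (hrm : 2 * r ≤ m - 1) :
    closure (coeffTuple m d '' Aset m r d fun _ => (d + 1) / 2) =
      coeffTuple m d '' {P : Matrix (Fin m) (Fin m) (Polynomial ℂ) |
        Pᵀ = -P ∧ (∀ i j, (P i j).natDegree ≤ d) ∧ normalRank P ≤ 2 * r} :=
  closure_Aset_ceil_eq_skew_symmetric_bounded_rank_general m r d (by omega)
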